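/- arXiv:1511.03993 — 2 statements merged into one kernel-verified Lean document; each statement's English description precedes it below -/
import Mathlib

section
/- For all real numbers x3 and u2 such that 14863*x3^3 - 23537*x3^2 + 3841*x3 - 159 = 0 and 44589*x3^2 - 65894*x3 + 2756*u2 + 3573 = 0, the quintuple (u0, u1, u2, x2, x3) with u0 = u1 = x3 and x2 = 1 satisfies g0 = g1 = g2 = g3 = g4 = 0. (These are naturally reductive Einstein solutions on E8(2) with u0 = u1 = x3 and x1 = x2.) -/
noncomputable def g0 (u0 u1 u2 x2 x3 : ℝ) : ℝ :=
  9*u0*u1*x2 ^ 2*x3 ^ 2 + 3*u0*u1*x2 ^ 2 + 18*u0*u1*x3 ^ 2 - 27*u1 ^ 2*x2 ^ 2*x3 ^ 2 - u1 ^ 2*x2 ^ 2 - 2*x2 ^ 2*x3 ^ 2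

noncomputable def g1 (u0 u1 u2 x2 x3 : ℝ) : ℝ :=
  27*u1 ^ 2*u2*x2 ^ 2*x3 ^ 2 + u1 ^ 2*u2*x2 ^ 2 - 12*u1*u2 ^ 2*x2 ^ 2*x3 ^ 2 - 6*u1*u2 ^ 2*x3 ^ 2 - 12*u1*x2 ^ 2*x3 ^ 2 + 2*u2*x2 ^ 2*x3 ^ 2

noncomputable def g2 (u0 u1 u2 x2 x3 : ℝ) : ℝ :=
  u0*u2*x2 ^ 2*x3 + 9*u1*u2*x2 ^ 2*x3 + 176*u2 ^ 2*x2 ^ 2*x3 + 36*u2 ^ 2*x3 + 60*u2*x2 ^ 3*x3 + 6*u2*x2 ^ 3 - 360*u2*x2 ^ 2*x3 + 6*u2*x2*x3 ^ 2 - 6*u2*x2 + 72*x2 ^ 2*x3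

noncomputable def g3 (u0 u1 u2 x2 x3 : ℝ) : ℝ :=
  -u0*x2 ^ 2*x3 + 4*u0*x3 - 9*u1*x2 ^ 2*x3 - 104*u2*x2 ^ 2*x3 + 104*u2*x3 - 120*x2 ^ 3*x3 - 18*x2 ^ 3 + 360*x2 ^ 2*x3 + 6*x2*x3 ^ 2 - 240*x2*x3 + 18*x2

noncomputable def g4 (u0 u1 u2 x2 x3 : ℝ) : ℝ :=
  9*u0*x2 ^ 2 - 4*u0*x3 ^ 2 + 9*u1*x2 ^ 2 - 104*u2*x3 ^ 2 + 60*x2 ^ 3*x3 ^ 2 + 174*x2 ^ 3*x3 - 360*x2 ^ 2*x3 - 174*x2*x3 ^ 3 + 240*x2*x3 ^ 2 + 150*x2*x3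

theorem stmt12 :
    ∀ x3 u2 : ℝ,
      14863 * x3 ^ 3 - 23537 * x3 ^ 2 + 3841 * x3 - 159 = 0 →
      44589 * x3 ^ 2 - 65894 * x3 + 2756 * u2 + 3573 = 0 →
      (g0 x3 x3 u2 1 x3 = 0 ∧ g1 x3 x3 u2 1 x3 = 0 ∧ g2 x3 x3 u2 1 x3 = 0 ∧ g3 x3 x3 u2 1 x3 = 0 ∧ g4 x3 x3 u2 1 x3 = 0) := by
  intro x3 u2 h1 h2
  have hu : u2 = -(44589 * x3 ^ 2 - 65894 * x3 + 3573) / 2756 := by linarith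
  clear h2
  subst hu
  unfold g0 g1 g2 g3 g4
  refine ⟨by ring, ?_, ?_, by ring, ?_⟩
  · linear_combination (3 * x3 ^ 2 * (1191/146068 + (513387/3797768)*x3 - (401301/3797768)*x3^2)) * h1
  · linear_combination (4 * x3 * (-184155/143312 + (133767/143312)*x3)) * h1
  · linear_combination (6 / 53 * x3) * h1
end

section
/- For all real numbers x2 and u1 such that (x2 - 1)*(864*x2^3 - 1676*x2^2 + 973*x2 - 177) = 0 and 59*u1 - 3456*x2^3 + 10160*x2^2 - 9003*x2 + 2240 = 0, the quintuple (u0, u1, u2, x2, x3) with u0 = u2 = x2 and x3 = 1 satisfies g0 = g1 = g2 = g3 = g4 = 0. (These are naturally reductive Einstein solutions on E8(2) with u0 = u2 = x2 and x1 = x3; for x2 = 1 one recovers the bi-invariant metric.) -/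
theorem stmt13 :
    ∀ x2 u1 : ℝ,
      (x2 - 1) * (864 * x2 ^ 3 - 1676 * x2 ^ 2 + 973 * x2 - 177) = 0 →
      59 * u1 - 3456 * x2 ^ 3 + 10160 * x2 ^ 2 - 9003 * x2 + 2240 = 0 →
      (g0 x2 u1 x2 x2 1 = 0 ∧ g1 x2 u1 x2 x2 1 = 0 ∧ g2 x2 u1 x2 x2 1 = 0 ∧ g3 x2 u1 x2 x2 1 = 0 ∧ g4 x2 u1 x2 x2 1 = 0) := by
  intro x u h1 h2
  have h : u * x + 27 * x ^ 2 - 40 * x + 12 = 0 := by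
    linear_combination (x / 59) * h2 + (4 / 59) * h1
  have hw : u * x = -27 * x ^ 2 + 40 * x - 12 := by linarith
  have e0 : g0 x u x x 1 = 0 := by
    have : g0 x u x x 1 = 12 * x ^ 2 * (u * x) + 18 * (u * x) - 28 * (u * x) ^ 2 - 2 * x ^ 2 := by
      unfold g0; ring
    rw [this, hw]
    linear_combination (-24) * h1
  refine ⟨e0, ?_, ?_, ?_, ?_⟩
  · unfold g0 at e0
    unfold g1
    linear_combination (-x) * e0
  · unfold g2
    linear_combination (9 * x ^ 2) * h
  · unfold g3
    linear_combination (-9 * x) * h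
  · unfold g4
    linear_combination (9 * x) * h
end
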